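/- For every set F of finitary operations on a countably infinite set X, the smallest local clone containing F equals Pol(Inv(F)). -/

import Mathlib

/-- A finitary operation on `X`: an `(n+1)`-ary function `X^(n+1) → X` (arities are ≥ 1). -/
abbrev FinOp (X : Type) := Σ n : ℕ, (Fin (n + 1) → X) → X

/-- A finitary relation on `X`: an `(m+1)`-ary relation `ρ ⊆ X^(m+1)` (arities are ≥ 1). -/
abbrev FinRel (X : Type) := Σ m : ℕ, Set (Fin (m + 1) → X)

variable {X : Type}

/-- `C` is a clone: it contains all projections and is closed under composition. -/
def IsClone (C : Set (FinOp X)) : Prop :=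
  (∀ (n : ℕ) (k : Fin (n + 1)), (⟨n, fun x => x k⟩ : FinOp X) ∈ C) ∧
  (∀ (n m : ℕ) (f : (Fin (n + 1) → X) → X) (g : Fin (n + 1) → (Fin (m + 1) → X) → X),
    (⟨n, f⟩ : FinOp X) ∈ C → (∀ i, (⟨m, g i⟩ : FinOp X) ∈ C) →
    (⟨m, fun x => f fun i => g i x⟩ : FinOp X) ∈ C)

/-- `C` is a local clone: a clone each of whose `n`-ary fragments is closed in the
product topology on `X^(X^n)`, where `X` carries the discrete topology. -/
def IsLocalClone (C : Set (FinOp X)) : Prop :=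
  IsClone C ∧
  ∀ n : ℕ,
    letI : TopologicalSpace X := ⊥
    IsClosed {f : (Fin (n + 1) → X) → X | (⟨n, f⟩ : FinOp X) ∈ C}

/-- The smallest local clone containing `F` (the local clone generated by `F`). -/
def cllClosure (F : Set (FinOp X)) : Set (FinOp X) :=
  ⋂₀ {C : Set (FinOp X) | IsLocalClone C ∧ F ⊆ C}

/-- `f` preserves the relation `ρ`. -/
def Preserves {n m : ℕ} (f : (Fin (n + 1) → X) → X) (ρ : Set (Fin (m + 1) → X)) : Prop :=
  ∀ r : Fin (n + 1) → Fin (m + 1) → X, (∀ i, r i ∈ ρ) → (fun j => f fun i => r i j) ∈ ρ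

/-- `Pol R`: all finitary operations preserving every relation in `R`. -/
def Polymorphisms (R : Set (FinRel X)) : Set (FinOp X) :=
  {f | ∀ ρ ∈ R, Preserves f.2 ρ.2}

/-- `Inv F`: all finitary relations invariant under every operation in `F`. -/
def Invariants (F : Set (FinOp X)) : Set (FinRel X) :=
  {ρ | ∀ f ∈ F, Preserves f.2 ρ.2}

/-- The clone of projections. -/
def projClone (X : Type) : Set (FinOp X) :=
  {f | ∃ k : Fin (f.1 + 1), f.2 = fun x => x k}

/-!
Sets of the form `Pol R` are local clones because preserving a relation is a condition on finitely
many values at a time. Conversely, let `C` be a local clone and `f ∈ Pol (Inv C)` be `n`-ary. For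
points `a₁, …, aₘ` of `Xⁿ`, the tuples `(g a₁, …, g aₘ)` with `g ∈ C` form a relation invariant
under `C`, which contains the coordinate tuples of the points because `C` contains the projections.
Since `f` preserves it, `(f a₁, …, f aₘ)` is one of these tuples: `f` agrees on any finite set with
a member of `C`, so `f ∈ C` by closedness.
-/

lemma Preserves.proj {n m : ℕ} (k : Fin (n + 1)) (ρ : Set (Fin (m + 1) → X)) :
    Preserves (fun x : Fin (n + 1) → X => x k) ρ :=
  fun _ hr => hr k

lemma Preserves.comp {n m l : ℕ} {f : (Fin (n + 1) → X) → X}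
    {g : Fin (n + 1) → (Fin (m + 1) → X) → X} {ρ : Set (Fin (l + 1) → X)}
    (hf : Preserves f ρ) (hg : ∀ i, Preserves (g i) ρ) :
    Preserves (fun x => f fun i => g i x) ρ :=
  fun r hr => hf _ fun i => hg i r hr

lemma isClosed_setOf_preserves [TopologicalSpace X] (n : ℕ) {m : ℕ} {ρ : Set (Fin (m + 1) → X)}
    (hρ : IsClosed ρ) : IsClosed {f : (Fin (n + 1) → X) → X | Preserves f ρ} := by
  simp only [Preserves, Set.ofPred_forall]
  refine isClosed_iInter fun r => isClosed_iInter fun _ => hρ.preimage ?_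
  exact continuous_pi fun j => continuous_apply fun i => r i j

lemma isClone_polymorphisms (R : Set (FinRel X)) : IsClone (Polymorphisms R) :=
  ⟨fun _ k ρ _ => .proj k ρ.2, fun _ _ _ _ hf hg ρ hρ => (hf ρ hρ).comp fun i => hg i ρ hρ⟩

/-- The `(n + 1)`-ary fragment of a set of operations, as a subset of the space `X^(X^(n + 1))`. -/
def fragment (C : Set (FinOp X)) (n : ℕ) : Set ((Fin (n + 1) → X) → X) :=
  {f | (⟨n, f⟩ : FinOp X) ∈ C}

lemma fragment_polymorphisms (R : Set (FinRel X)) (n : ℕ) :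
    fragment (Polymorphisms R) n = ⋂ ρ ∈ R, {f | Preserves f ρ.2} := by
  ext f
  simp only [fragment, Polymorphisms, Set.mem_ofPred_eq, Set.mem_iInter]

lemma isLocalClone_polymorphisms (R : Set (FinRel X)) : IsLocalClone (Polymorphisms R) := by
  refine ⟨isClone_polymorphisms R, fun n => ?_⟩
  let : TopologicalSpace X := ⊥
  have : DiscreteTopology X := ⟨rfl⟩
  change IsClosed (fragment (Polymorphisms R) n)
  rw [fragment_polymorphisms]
  exact isClosed_biInter fun ρ _ => isClosed_setOf_preserves n (isClosed_discrete ρ.2)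

lemma subset_polymorphisms_invariants (F : Set (FinOp X)) : F ⊆ Polymorphisms (Invariants F) :=
  fun f hf _ hρ => hρ f hf

lemma polymorphisms_invariants_mono {F G : Set (FinOp X)} (h : F ⊆ G) :
    Polymorphisms (Invariants F) ⊆ Polymorphisms (Invariants G) :=
  fun _ hf ρ hρ => hf ρ fun g hg => hρ g (h hg)

lemma mem_closure_of_forall_finset_exists_eqOn {ι Y : Type*} [TopologicalSpace Y]
    {S : Set (ι → Y)} {f : ι → Y} (h : ∀ I : Finset ι, ∃ g ∈ S, Set.EqOn g f I) :
    f ∈ closure S := by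
  refine mem_closure_iff.2 fun U hU hfU => ?_
  obtain ⟨I, u, hu, hIU⟩ := isOpen_pi_iff.1 hU f hfU
  obtain ⟨g, hgS, hgf⟩ := h I
  exact ⟨g, hIU fun x hx => hgf hx ▸ (hu x hx).2, hgS⟩

/-- The relation of all tuples of values `(g a₀, …, g aₘ)`, for `g` in the `(n + 1)`-ary fragment
of `C`. When `C` is a clone this is the subalgebra of `X^(m + 1)` generated by the `n + 1` tuples
of `i`-th coordinates of the points `aⱼ`. -/
def valueRel (C : Set (FinOp X)) {n m : ℕ} (a : Fin (m + 1) → Fin (n + 1) → X) :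
    Set (Fin (m + 1) → X) :=
  (· ∘ a) '' fragment C n

namespace IsClone

variable {C : Set (FinOp X)} {n m : ℕ}

lemma coord_mem_valueRel (hC : IsClone C) (a : Fin (m + 1) → Fin (n + 1) → X) (i : Fin (n + 1)) :
    (fun j => a j i) ∈ valueRel C a :=
  ⟨fun x => x i, hC.1 n i, rfl⟩

lemma valueRel_mem_invariants (hC : IsClone C) (a : Fin (m + 1) → Fin (n + 1) → X) :
    (⟨m, valueRel C a⟩ : FinRel X) ∈ Invariants C := by
  rintro ⟨k, h⟩ hh r hr
  choose g hgC hgr using hr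
  refine ⟨fun x => h fun i => g i x, hC.2 k n h g hh hgC, ?_⟩
  simp only [← hgr, Function.comp_def]

lemma exists_mem_fragment_comp_eq (hC : IsClone C) {f : (Fin (n + 1) → X) → X}
    (hf : f ∈ fragment (Polymorphisms (Invariants C)) n) (a : Fin (m + 1) → Fin (n + 1) → X) :
    ∃ g ∈ fragment C n, g ∘ a = f ∘ a :=
  hf _ (hC.valueRel_mem_invariants a) (fun i j => a j i) (hC.coord_mem_valueRel a)

lemma exists_mem_fragment_eqOn (hC : IsClone C) {f : (Fin (n + 1) → X) → X}
    (hf : f ∈ fragment (Polymorphisms (Invariants C)) n) (I : Finset (Fin (n + 1) → X)) :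
    ∃ g ∈ fragment C n, Set.EqOn g f I := by
  obtain ⟨_ | m, a, -, haI⟩ := I.finite_toSet.fin_param
  · -- Relations have positive arity, so the empty set of points is interpolated by a projection.
    exact ⟨fun x => x 0, hC.1 n 0, by simp [← haI]⟩
  · obtain ⟨g, hgC, hga⟩ := hC.exists_mem_fragment_comp_eq hf a
    exact ⟨g, hgC, haI ▸ Set.eqOn_range.2 hga⟩

lemma fragment_polymorphisms_invariants_subset_closure [TopologicalSpace X] (hC : IsClone C)
    (n : ℕ) : fragment (Polymorphisms (Invariants C)) n ⊆ closure (fragment C n) :=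
  fun _ hf => mem_closure_of_forall_finset_exists_eqOn (hC.exists_mem_fragment_eqOn hf)

end IsClone

lemma IsLocalClone.polymorphisms_invariants_subset {C : Set (FinOp X)} (hC : IsLocalClone C) :
    Polymorphisms (Invariants C) ⊆ C := by
  rintro ⟨n, f⟩ hf
  let : TopologicalSpace X := ⊥
  have hclosed : IsClosed (fragment C n) := hC.2 n
  exact hclosed.closure_subset (hC.1.fragment_polymorphisms_invariants_subset_closure n hf)

theorem cllClosure_eq_pol_inv_general (F : Set (FinOp X)) :
    cllClosure F = Polymorphisms (Invariants F) := by
  apply Set.Subset.antisymm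
  · exact Set.sInter_subset_of_mem
      ⟨isLocalClone_polymorphisms _, subset_polymorphisms_invariants F⟩
  · refine Set.subset_sInter fun C ⟨hC, hFC⟩ => ?_
    exact (polymorphisms_invariants_mono hFC).trans hC.polymorphisms_invariants_subset

/-- For every set `F` of finitary operations on a countably infinite set `X`,
the smallest local clone containing `F` equals `Pol (Inv F)`. -/
theorem cllClosure_eq_pol_inv (X : Type) [Countable X] [Infinite X]
    (F : Set (FinOp X)) : cllClosure F = Polymorphisms (Invariants F) :=
  cllClosure_eq_pol_inv_general F
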